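/- If (p_{XY}, p_{Z|XY}) is computable with perfect security (i.e., there exists a joint distribution p(x,y,m,z) with marginal p_{XY}, with p(z|x,y) = p_{Z|XY}(z|x,y), satisfying the Markov chains M − X − (Y,Z), M − (Y,Z) − X, and Z − (M,Y) − X), then each equivalence class 𝒳_i of the relation ≡ is column monochromatic: for every y ∈ 𝒴 and distinct x, x' ∈ 𝒳_i with p_{XY}(x,y) > 0 and p_{XY}(x',y) > 0, one has p_{Z|XY}(z|x,y) = p_{Z|XY}(z|x',y) for all z ∈ 𝒵. -/

import Mathlib

open Finset

/-!
By `M − X − (Y,Z)` and `M − (Y,Z) − X`, inputs `x` and `x'` that can produce the same view `(y, z)`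
induce the same law of the message `M`; hence so do all inputs of one `≡`-class. By
`M − X − (Y,Z)` and `Z − (M,Y) − X`, for any message `m` that `x` sends with positive probability,
`p(z|x,y) = p(z|m,y)`, which depends on `x` only through `m`. Members of one class have a common
such `m`.
-/

/-- The weight `w` on `A × B × C` is a Markov chain `A − B − C` with conditional law `k a b` of `a`
given `b`. The condition `w(a | b, c) = k a b` is cleared of denominators, so that it makes sense
in a semiring and forces `w a b c = 0` where `(b, c)` has weight zero. -/
def IsMarkovChainWith {K A B C : Type*} [CommSemiring K] [Fintype A]
    (w : A → B → C → K) (k : A → B → K) : Prop :=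
  ∀ a b c, w a b c = (∑ a', w a' b c) * k a b

/-- The relation `x ∼ x'`: some output `z` has positive probability at both `(x, y)` and `(x', y)`
for some `y` that is possible with both inputs. -/
def Confusable {K X Y Z : Type*} [Zero K] [LT K] (pXY : X → Y → K) (pZ : Z → X → Y → K)
    (x x' : X) : Prop :=
  ∃ (y : Y) (z : Z), 0 < pXY x y ∧ 0 < pXY x' y ∧ 0 < pZ z x y ∧ 0 < pZ z x' y

namespace IsMarkovChainWith

theorem of_div_eq {K A B C : Type*} [Semifield K] [LinearOrder K] [IsStrictOrderedRing K]
    [Fintype A] {w : A → B → C → K} {k : A → B → K} (hw : ∀ a b c, 0 ≤ w a b c)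
    (h : ∀ a b c, 0 < ∑ a', w a' b c → w a b c / ∑ a', w a' b c = k a b) :
    IsMarkovChainWith w k := by
  intro a b c
  rcases (sum_nonneg fun a' _ => hw a' b c).eq_or_lt with hzero | hpos
  · rw [← hzero, zero_mul]
    exact (sum_eq_zero_iff_of_nonneg fun a' _ => hw a' b c).1 hzero.symm a (mem_univ a)
  · rw [← h a b c hpos, mul_div_cancel₀ _ hpos.ne']

section

variable {K A B C : Type*} [CommSemiring K] [Fintype A] {w : A → B → C → K} {k : A → B → K}

theorem exists_kernel_ne_zero (hk : IsMarkovChainWith w k) {b : B} {c : C}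
    (hbc : ∑ a, w a b c ≠ 0) : ∃ a, k a b ≠ 0 := by
  obtain ⟨a, -, ha⟩ := exists_ne_zero_of_sum_ne_zero hbc
  exact ⟨a, right_ne_zero_of_mul (hk a b c ▸ ha)⟩

theorem sum_right {D : Type*} [Fintype D] {w : A → B → C × D → K}
    (hk : IsMarkovChainWith w k) :
    IsMarkovChainWith (fun a b c => ∑ d, w a b (c, d)) k := by
  intro a b c
  calc ∑ d, w a b (c, d)
      = ∑ d, (∑ a', w a' b (c, d)) * k a b := sum_congr rfl fun d _ => hk a b (c, d)
    _ = (∑ a', ∑ d, w a' b (c, d)) * k a b := by rw [← sum_mul, sum_comm]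

variable [IsCancelMulZero K]

theorem kernel_eq_kernel {l : A → C → K} (hk : IsMarkovChainWith w k)
    (hl : IsMarkovChainWith (fun a c b => w a b c) l) {b : B} {c : C}
    (hbc : ∑ a, w a b c ≠ 0) (a : A) : k a b = l a c :=
  mul_left_cancel₀ hbc ((hk a b c).symm.trans (hl a c b))

theorem kernel_eq_of_reflTransGen {l : A → C → K} (hk : IsMarkovChainWith w k)
    (hl : IsMarkovChainWith (fun a c b => w a b c) l) {b b' : B}
    (h : Relation.ReflTransGen
      (fun b₁ b₂ => ∃ c, ∑ a, w a b₁ c ≠ 0 ∧ ∑ a, w a b₂ c ≠ 0) b b') (a : A) :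
    k a b = k a b' := by
  induction h with
  | refl => rfl
  | tail _ hstep ih =>
    obtain ⟨c, h₁, h₂⟩ := hstep
    exact ih.trans ((hk.kernel_eq_kernel hl h₁ a).trans (hk.kernel_eq_kernel hl h₂ a).symm)

theorem sum_eq_mul_kernel {D : Type*} [Fintype D] {w : A → B → C × D → K} {s : D → A × C → K}
    (hk : IsMarkovChainWith w k)
    (hs : IsMarkovChainWith (fun d (ac : A × C) b => w ac.1 b (ac.2, d)) s)
    {a : A} {b : B} (hab : k a b ≠ 0) (c : C) (d : D) :
    ∑ a', w a' b (c, d) = (∑ a', ∑ d', w a' b (c, d')) * s d (a, c) := by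
  apply mul_right_cancel₀ hab
  calc (∑ a', w a' b (c, d)) * k a b
      = w a b (c, d) := (hk a b (c, d)).symm
    _ = (∑ d', w a b (c, d')) * s d (a, c) := hs d (a, c) b
    _ = (∑ a', ∑ d', w a' b (c, d')) * k a b * s d (a, c) := by rw [← hk.sum_right a b c]
    _ = (∑ a', ∑ d', w a' b (c, d')) * s d (a, c) * k a b := mul_right_comm _ _ _

end

end IsMarkovChainWith

theorem stmt_3_general {K M X Y Z : Type*} [Semifield K] [LinearOrder K] [IsStrictOrderedRing K]
    [Fintype M] [Fintype Z] {pXY : X → Y → K} {pZ : Z → X → Y → K} {p : M → X → Y → Z → K}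
    (hnn : ∀ m x y z, 0 ≤ p m x y z)
    (hmarg : ∀ x y, ∑ m, ∑ z, p m x y z = pXY x y)
    (hcorrect : ∀ x y z, 0 < pXY x y → (∑ m, p m x y z) / pXY x y = pZ z x y)
    {q : M → X → K} {r : M → Y → Z → K} {s : M → Y → Z → K}
    (hMC1 : ∀ m x y z, 0 < ∑ m', p m' x y z → p m x y z / ∑ m', p m' x y z = q m x)
    (hMC2 : ∀ m x y z, 0 < ∑ m', p m' x y z → p m x y z / ∑ m', p m' x y z = r m y z)
    (hMC3 : ∀ m x y z, 0 < ∑ z', p m x y z' → p m x y z / ∑ z', p m x y z' = s m y z)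
    {x x' : X} (hxx' : Relation.ReflTransGen (Confusable pXY pZ) x x')
    {y : Y} (hx : 0 < pXY x y) (hx' : 0 < pXY x' y) (z : Z) :
    pZ z x y = pZ z x' y := by
  have hM_X_YZ : IsMarkovChainWith (fun m x (yz : Y × Z) => p m x yz.1 yz.2) q :=
    .of_div_eq (fun _ _ _ => hnn _ _ _ _) fun m x yz => hMC1 m x yz.1 yz.2
  have hM_YZ_X : IsMarkovChainWith (fun m (yz : Y × Z) x => p m x yz.1 yz.2)
      fun m yz => r m yz.1 yz.2 :=
    .of_div_eq (fun _ _ _ => hnn _ _ _ _) fun m yz x => hMC2 m x yz.1 yz.2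
  have hZ_MY_X : IsMarkovChainWith (fun z (my : M × Y) x => p my.1 x my.2 z)
      fun z my => s my.1 my.2 z :=
    .of_div_eq (fun _ _ _ => hnn _ _ _ _) fun z my x => hMC3 my.1 x my.2 z
  have hpXYZ {x y z} (h : 0 < pXY x y) (hz : 0 < pZ z x y) : ∑ m, p m x y z ≠ 0 :=
    fun h0 => hz.ne (by rw [← hcorrect x y z h, h0, zero_div])
  have hsupport : Relation.ReflTransGen (fun x₁ x₂ => ∃ yz : Y × Z,
      ∑ m, p m x₁ yz.1 yz.2 ≠ 0 ∧ ∑ m, p m x₂ yz.1 yz.2 ≠ 0) x x' :=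
    Relation.ReflTransGen.mono (fun _ _ ⟨y, z, h₁, h₂, hz₁, hz₂⟩ =>
      ⟨(y, z), hpXYZ h₁ hz₁, hpXYZ h₂ hz₂⟩) _ _ hxx'
  have hq : ∀ m, q m x = q m x' := hM_X_YZ.kernel_eq_of_reflTransGen hM_YZ_X hsupport
  obtain ⟨m, hm⟩ : ∃ m, q m x ≠ 0 :=
    hM_X_YZ.sum_right.exists_kernel_ne_zero ((hmarg x y).trans_ne hx.ne')
  have hpZ {x} (h : 0 < pXY x y) (hmx : q m x ≠ 0) : pZ z x y = s m y z := by
    rw [← hcorrect x y z h, hM_X_YZ.sum_eq_mul_kernel hZ_MY_X hmx y z, hmarg,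
      mul_div_cancel_left₀ _ h.ne']
  exact (hpZ hx hm).trans (hpZ hx' (hq m ▸ hm)).symm

/-- If `(p_{XY}, p_{Z|XY})` is computable with perfect security (there is a joint
distribution `p(m,x,y,z)` with the right marginal, correct output distribution, and
Markov chains `M − X − (Y,Z)`, `M − (Y,Z) − X`, `Z − (M,Y) − X`), then every
equivalence class of `≡` is column monochromatic. -/
theorem stmt_3 {M X Y Z : Type} [Fintype M] [Fintype X] [Fintype Y] [Fintype Z]
    (pXY : X → Y → ℝ) (pZ : Z → X → Y → ℝ)
    (hXYnn : ∀ x y, 0 ≤ pXY x y) (hXYsum : ∑ x, ∑ y, pXY x y = 1)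
    (hZnn : ∀ z x y, 0 ≤ pZ z x y) (hZsum : ∀ x y, ∑ z, pZ z x y = 1)
    -- the joint distribution induced by a perfectly secure protocol
    (p : M → X → Y → Z → ℝ)
    (hnn : ∀ m x y z, 0 ≤ p m x y z)
    (hmarg : ∀ x y, ∑ m, ∑ z, p m x y z = pXY x y)
    -- correctness: p(z|x,y) = p_{Z|XY}(z|x,y)
    (hcorrect : ∀ x y z, pXY x y > 0 → (∑ m, p m x y z) / pXY x y = pZ z x y)
    (pX : X → ℝ) (hpX : ∀ x, pX x = ∑ m, ∑ y, ∑ z, p m x y z)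
    (pMX : M → X → ℝ) (hpMX : ∀ m x, pMX m x = ∑ y, ∑ z, p m x y z)
    (pXYZ : X → Y → Z → ℝ) (hpXYZ : ∀ x y z, pXYZ x y z = ∑ m, p m x y z)
    (pYZ : Y → Z → ℝ) (hpYZ : ∀ y z, pYZ y z = ∑ m, ∑ x, p m x y z)
    (pMYZ : M → Y → Z → ℝ) (hpMYZ : ∀ m y z, pMYZ m y z = ∑ x, p m x y z)
    (pMY : M → Y → ℝ) (hpMY : ∀ m y, pMY m y = ∑ x, ∑ z, p m x y z)
    (pMXY : M → X → Y → ℝ) (hpMXY : ∀ m x y, pMXY m x y = ∑ z, p m x y z)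
    -- Markov chain M − X − (Y,Z)
    (hMC1 : ∀ m x y z, pXYZ x y z > 0 →
      p m x y z / pXYZ x y z = pMX m x / pX x)
    -- Markov chain M − (Y,Z) − X
    (hMC2 : ∀ m x y z, pXYZ x y z > 0 →
      p m x y z / pXYZ x y z = pMYZ m y z / pYZ y z)
    -- Markov chain Z − (M,Y) − X
    (hMC3 : ∀ m x y z, pMXY m x y > 0 →
      p m x y z / pMXY m x y = pMYZ m y z / pMY m y)
    -- the relation ∼
    (sim : X → X → Prop)
    (hsim : ∀ x x', sim x x' ↔ ∃ (y : Y) (z : Z),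
      pXY x y > 0 ∧ pXY x' y > 0 ∧ pZ z x y > 0 ∧ pZ z x' y > 0) :
    -- column monochromaticity of each equivalence class of ≡
    ∀ x x', Relation.ReflTransGen sim x x' →
      ∀ y, pXY x y > 0 → pXY x' y > 0 → ∀ z, pZ z x y = pZ z x' y := by
  simp only [hpXYZ, hpMXY] at hMC1 hMC2 hMC3
  obtain rfl : sim = Confusable pXY pZ := funext₂ fun x x' => propext (hsim x x')
  exact fun x x' h y hx hx' => stmt_3_general hnn hmarg hcorrect hMC1 hMC2 hMC3 h hx hx'
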